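/- For every permutation π ∈ S_n, the size of the MVP fibre equals the number of valid 1-subgraphs, and is bounded above by the product over all positions of one plus the number of left-inversions: |Fib_n(π)| = |Valid(π)| ≤ ∏_{i=1}^{n} (1 + |LInv(π,i)|), where LInv(π,i) = {j : j < i and π_j > π_i}. -/

import Mathlib

/- Common definitions: the classical and MVP parking processes, parking
functions, inversion graphs and 1-subgraphs, Motzkin paths, and sandpile
configurations on complete graphs. Spots, cars and vertices are 0-indexed
(element `i : Fin n` corresponds to the 1-indexed `i+1` of the paper). -/

namespace MVPPaper

open Finset

variable {n : ℕ}

/-- The first unoccupied spot `k ≥ s` in the occupancy `occ`, if any exists.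
`occ k = some i` means spot `k` is occupied by car `i`. -/
def firstFree (occ : Fin n → Option (Fin n)) (s : Fin n) : Option (Fin n) :=
  (List.finRange n).find? fun k => decide (s ≤ k) && (occ k).isNone

/-- One step of the classical parking process: car `i`, preferring spot `s`,
parks in the first free spot `k ≥ s` (failure if none exists). -/
def classicalStep (occ : Fin n → Option (Fin n)) (i s : Fin n) :
    Option (Fin n → Option (Fin n)) :=
  (firstFree occ s).map fun k => Function.update occ k (some i)

/-- One step of the MVP parking process: car `i` parks in its preferred spot
`s`; if `s` was occupied by an earlier car `j`, then `j` is bumped out and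
drives on to the first free spot `k ≥ s` (failure if none exists). -/
def mvpStep (occ : Fin n → Option (Fin n)) (i s : Fin n) :
    Option (Fin n → Option (Fin n)) :=
  match occ s with
  | none => some (Function.update occ s (some i))
  | some j =>
      (firstFree (Function.update occ s (some i)) s).map fun k =>
        Function.update (Function.update occ s (some i)) k (some j)

/-- Run a parking process: cars `0, 1, …, n-1` enter in order, with car `i`
preferring spot `p i`. Returns the final occupancy, or `none` on failure. -/
def runProcess
    (step : (Fin n → Option (Fin n)) → Fin n → Fin n → Option (Fin n → Option (Fin n)))
    (p : Fin n → Fin n) : Option (Fin n → Option (Fin n)) :=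
  List.foldlM (fun occ i => step occ i (p i)) (fun _ => none) (List.finRange n)

def mvpRun (p : Fin n → Fin n) : Option (Fin n → Option (Fin n)) :=
  runProcess mvpStep p

def classicalRun (p : Fin n → Fin n) : Option (Fin n → Option (Fin n)) :=
  runProcess classicalStep p

/-- All cars park successfully under the MVP process. -/
def IsMVPParking (p : Fin n → Fin n) : Prop := (mvpRun p).isSome

/-- All cars park successfully under the classical process. -/
def IsClassicalParking (p : Fin n → Fin n) : Prop := (classicalRun p).isSome

/-- `MVPOutcome p π` means that the MVP parking process for `p` succeeds, and
car `π i` finally occupies spot `i` for all `i`; that is, `O_MVP(p) = π`. -/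
def MVPOutcome (p : Fin n → Fin n) (π : Equiv.Perm (Fin n)) : Prop :=
  ∃ occ, mvpRun p = some occ ∧ ∀ i, occ i = some (π i)

/-- `p` is a parking function: for every `k`, at least `k+1` cars prefer a spot
`≤ k` (the classical counting characterisation, 0-indexed). -/
def IsParkingFunction (p : Fin n → Fin n) : Prop :=
  ∀ k : Fin n, (k : ℕ) + 1 ≤ (univ.filter fun i => p i ≤ k).card

/-- The fibre of the MVP outcome map over `π`: parking functions with MVP
outcome `π`. -/
def FibMVP (π : Equiv.Perm (Fin n)) : Set (Fin n → Fin n) :=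
  {p | IsParkingFunction p ∧ MVPOutcome p π}

/-- The set of inversions of `π` (where `π i` is the car occupying spot `i`):
pairs `(j, i)` with `j < i` and `π j > π i`. These are the edges of the
inversion graph `G_π`. -/
def invFinset (π : Equiv.Perm (Fin n)) : Finset (Fin n × Fin n) :=
  univ.filter fun e => e.1 < e.2 ∧ π e.2 < π e.1

/-- The left-inversions of `π` at `i`. -/
def lInv (π : Equiv.Perm (Fin n)) (i : Fin n) : Finset (Fin n) :=
  univ.filter fun j => j < i ∧ π i < π j

/-- A 1-subgraph of the inversion graph of `π`: a set of inversions with at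
most one incident left-arc at each vertex. -/
def IsOneSubgraph (π : Equiv.Perm (Fin n)) (S : Finset (Fin n × Fin n)) : Prop :=
  S ⊆ invFinset π ∧ ∀ i j j' : Fin n, (j, i) ∈ S → (j', i) ∈ S → j = j'

/-- The map `Ψ_{Sub→PF}`: the parking preference `p` where `p (π i) = j` if
`(j, i) ∈ S` (for the unique such `j`), and `p (π i) = i` otherwise. -/
noncomputable def subToPF (π : Equiv.Perm (Fin n)) (S : Finset (Fin n × Fin n)) :
    Fin n → Fin n := fun c =>
  if h : ∃ j, (j, π.symm c) ∈ S then h.choose else π.symm c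

/-- The map `Ψ_{PF→Sub}`: the set of inversions `(j, i)` of `π` with
`p (π i) = j`. -/
def pfToSub (π : Equiv.Perm (Fin n)) (p : Fin n → Fin n) : Finset (Fin n × Fin n) :=
  (invFinset π).filter fun e => p (π e.2) = e.1

/-- A 1-subgraph `S` is valid if the MVP outcome of `Ψ_{Sub→PF}(S)` is `π`. -/
def IsValid (π : Equiv.Perm (Fin n)) (S : Finset (Fin n × Fin n)) : Prop :=
  MVPOutcome (subToPF π S) π

/-- `π` contains the pattern `321`. -/
def Contains321 (π : Equiv.Perm (Fin n)) : Prop :=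
  ∃ i j k : Fin n, i < j ∧ j < k ∧ π k < π j ∧ π j < π i

/-- `π` contains the pattern `3412`. -/
def Contains3412 (π : Equiv.Perm (Fin n)) : Prop :=
  ∃ i j k l : Fin n, i < j ∧ j < k ∧ k < l ∧ π k < π l ∧ π l < π i ∧ π i < π j

/-- `S` is `P⃗₂`-free: there is no triple `i < j < k` with `(i,j) ∈ S` and
`(j,k) ∈ S`. -/
def P2Free (S : Finset (Fin n × Fin n)) : Prop :=
  ¬∃ i j k : Fin n, i < j ∧ j < k ∧ (i, j) ∈ S ∧ (j, k) ∈ S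

/-- `S` is horizontally separated (HS): any two distinct edges `(j,i)` and
`(j',i')` of `S` satisfy `i < j'` or `i' < j`. -/
def IsHS (S : Finset (Fin n × Fin n)) : Prop :=
  ∀ e ∈ S, ∀ e' ∈ S, e ≠ e' → e.2 < e'.1 ∨ e'.2 < e.1

/-- Steps of a Motzkin path: up, horizontal, down. -/
inductive MStep : Type
  | U : MStep
  | H : MStep
  | D : MStep
  deriving DecidableEq

/-- The height change of a step. -/
def stepVal : MStep → ℤ
  | MStep.U => 1
  | MStep.H => 0
  | MStep.D => -1

/-- The number of cars preferring spot `j` in `p`. -/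
def prefCount (p : Fin n → Fin n) (j : Fin n) : ℕ :=
  (univ.filter fun i => p i = j).card

/-- The lattice path `Φ(p)`: step `j` is `U`, `H` or `D` according to whether
spot `j` is preferred by at least two, exactly one, or no cars. -/
def Phi (p : Fin n → Fin n) : Fin n → MStep := fun j =>
  if 2 ≤ prefCount p j then MStep.U
  else if prefCount p j = 1 then MStep.H
  else MStep.D

/-- An `n`-step lattice path is a Motzkin path: it ends at height `0` and no
prefix goes below height `0`. -/
def IsMotzkinPath (φ : Fin n → MStep) : Prop :=
  (∑ j : Fin n, stepVal (φ j)) = 0 ∧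
  ∀ k : Fin n, 0 ≤ ∑ j ∈ univ.filter (fun j : Fin n => j ≤ k), stepVal (φ j)

/-- The decreasing permutation `dec_n = n(n-1)⋯1`: spot `i` gets car `n-1-i`
(0-indexed). -/
def decPerm (n : ℕ) : Equiv.Perm (Fin n) :=
  ⟨Fin.rev, Fin.rev, Fin.rev_rev, Fin.rev_rev⟩

/-- A non-crossing matching arc diagram on `{0, …, n-1}`: arcs go left to
right, each vertex is incident to at most one arc, and no two arcs cross. -/
def IsNonCrossMatching (S : Finset (Fin n × Fin n)) : Prop :=
  (∀ e ∈ S, e.1 < e.2) ∧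
  (∀ e ∈ S, ∀ e' ∈ S, e ≠ e' →
    e.1 ≠ e'.1 ∧ e.1 ≠ e'.2 ∧ e.2 ≠ e'.1 ∧ e.2 ≠ e'.2) ∧
  ¬∃ i j k l : Fin n, i < j ∧ j < k ∧ k < l ∧ (i, k) ∈ S ∧ (j, l) ∈ S

/-- A stable configuration `c` (grain counts, each `< n`) on the complete graph
`K_n` is recurrent; by Dhar's burning criterion this amounts on `K_n` to the
existence of an ordering `v` of the vertices with `c (v k) ≥ n - (k+1)` for
every `k` (0-indexed). -/
def IsRecurrentK (c : Fin n → ℕ) : Prop :=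
  (∀ i, c i < n) ∧ ∃ v : Equiv.Perm (Fin n), ∀ k : Fin n, n ≤ c (v k) + (k : ℕ) + 1

/-- Invariant of the process. -/
def PInv (p : Fin n → Fin n) (occ : Fin n → Option (Fin n)) : Prop :=
  ∀ k c, occ k = some c → p c ≤ k ∧ (p c < k → ∃ c', c < c' ∧ occ (p c) = some c')

theorem firstFree_spec {occ : Fin n → Option (Fin n)} {s k : Fin n}
    (h : firstFree occ s = some k) : s ≤ k ∧ occ k = none := by
  have := List.find?_some h
  simpa using this

theorem step_inv {p : Fin n → Fin n} {occ occ' : Fin n → Option (Fin n)} {i : Fin n}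
    (hI : PInv p occ) (hlt : ∀ k c, occ k = some c → c < i)
    (h : mvpStep occ i (p i) = some occ') :
    PInv p occ' ∧ ∀ k c, occ' k = some c → c ≤ i := by
  unfold mvpStep at h
  split at h
  · rename_i h0
    simp only [Option.some.injEq] at h
    subst h
    constructor
    · intro k c hk
      by_cases hks : k = p i
      · subst hks
        simp at hk
        subst hk
        exact ⟨le_rfl, fun h => absurd h (lt_irrefl _)⟩
      · rw [Function.update_of_ne hks] at hk
        obtain ⟨h1, h2⟩ := hI k c hk
        refine ⟨h1, fun h3 => ?_⟩
        obtain ⟨c', h4, h5⟩ := h2 h3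
        refine ⟨c', h4, ?_⟩
        rw [Function.update_of_ne, h5]
        intro h6
        rw [h6, h0] at h5
        cases h5
    · intro k c hk
      by_cases hks : k = p i
      · subst hks
        simp at hk
        exact hk.symm.le
      · rw [Function.update_of_ne hks] at hk
        exact (hlt _ _ hk).le
  · rename_i j h0
    rw [Option.map_eq_some_iff] at h
    obtain ⟨k, hf, rfl⟩ := h
    obtain ⟨hsk, hkn⟩ := firstFree_spec hf
    have hks : k ≠ p i := by
      rintro rfl
      simp at hkn
    rw [Function.update_of_ne hks] at hkn
    have hj := hlt _ _ h0
    have key : ∀ t c, occ t = some c → p c < t ∨ t = p i ∧ p c = p i →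
        ∃ c', c < c' ∧ Function.update (Function.update occ (p i) (some i)) k (some j) (p c)
          = some c' := by
      intro t c ht h3
      by_cases h6 : p c = p i
      · refine ⟨i, hlt _ _ ht, ?_⟩
        rw [h6, Function.update_of_ne hks.symm, Function.update_self]
      · obtain ⟨c', h4, h5⟩ := (hI t c ht).2 (h3.resolve_right fun h => h6 h.2)
        refine ⟨c', h4, ?_⟩
        rw [Function.update_of_ne, Function.update_of_ne h6, h5]
        intro h7
        rw [h7, hkn] at h5
        cases h5
    constructor
    · intro t c ht
      by_cases htk : t = k
      · subst htk
        simp at ht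
        subst ht
        have h1 := (hI _ _ h0).1
        refine ⟨h1.trans hsk, fun _ => key _ _ h0 ?_⟩
        rcases h1.lt_or_eq with h | h
        · exact Or.inl h
        · exact Or.inr ⟨rfl, h⟩
      · rw [Function.update_of_ne htk] at ht
        by_cases hts : t = p i
        · subst hts
          simp at ht
          subst ht
          exact ⟨le_rfl, fun h => absurd h (lt_irrefl _)⟩
        · rw [Function.update_of_ne hts] at ht
          exact ⟨(hI _ _ ht).1, fun h => key _ _ ht (Or.inl h)⟩
    · intro t c ht
      by_cases htk : t = k
      · subst htk
        simp at ht
        subst ht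
        exact hj.le
      · rw [Function.update_of_ne htk] at ht
        by_cases hts : t = p i
        · subst hts
          simp at ht
          exact ht.symm.le
        · rw [Function.update_of_ne hts] at ht
          exact (hlt _ _ ht).le

theorem fold_inv {p : Fin n → Fin n} (l : List (Fin n)) (hl : l.Pairwise (· < ·)) :
    ∀ occ occ' : Fin n → Option (Fin n), PInv p occ →
      (∀ k c, occ k = some c → ∀ i ∈ l, c < i) →
      List.foldlM (fun occ i => mvpStep occ i (p i)) occ l = some occ' → PInv p occ' := by
  induction l with
  | nil =>
    intro occ occ' hI _ h
    simp at h
    subst h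
    exact hI
  | cons i l ih =>
    intro occ occ' hI hlt h
    rw [List.foldlM_cons] at h
    obtain ⟨o1, h1, h2⟩ := Option.bind_eq_some_iff.1 h
    rw [List.pairwise_cons] at hl
    obtain ⟨hI1, hl1⟩ := step_inv hI (fun k c hk => hlt k c hk i (by simp)) h1
    exact ih hl.2 o1 occ' hI1 (fun k c hk x hx => (hl1 k c hk).trans_lt (hl.1 x hx)) h2

theorem outcome_spec {p : Fin n → Fin n} {π : Equiv.Perm (Fin n)} (h : MVPOutcome p π)
    (i : Fin n) : p (π i) ≤ i ∧ (p (π i) < i → π i < π (p (π i))) := by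
  obtain ⟨occ, h1, h2⟩ := h
  have hI : PInv p occ := fold_inv (List.finRange n) (List.sortedLT_finRange n).pairwise _ _
    (by intro k c h; cases h) (by intro k c h; cases h) h1
  obtain ⟨h3, h4⟩ := hI i (π i) (h2 i)
  refine ⟨h3, fun h5 => ?_⟩
  obtain ⟨c', h6, h7⟩ := h4 h5
  rw [h2] at h7
  cases h7
  exact h6

theorem outcome_pf {p : Fin n → Fin n} {π : Equiv.Perm (Fin n)} (h : MVPOutcome p π) :
    IsParkingFunction p := by
  intro k
  have h1 : ((Finset.Iic k).map π.toEmbedding).card = (k : ℕ) + 1 := by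
    simp
  rw [← h1]
  apply Finset.card_le_card
  intro c hc
  simp only [Finset.mem_map, Finset.mem_Iic] at hc
  obtain ⟨i, hi, rfl⟩ := hc
  simpa using (outcome_spec h i).1.trans hi

theorem subToPF_of_mem {π : Equiv.Perm (Fin n)} {S : Finset (Fin n × Fin n)}
    (hS : IsOneSubgraph π S) {i j : Fin n} (h : (j, i) ∈ S) : subToPF π S (π i) = j := by
  have hex : ∃ j, (j, π.symm (π i)) ∈ S := ⟨j, by simpa using h⟩
  unfold subToPF
  rw [dif_pos hex]
  exact hS.2 (π.symm (π i)) _ _ hex.choose_spec (by simpa using h)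

theorem subToPF_of_not {π : Equiv.Perm (Fin n)} {S : Finset (Fin n × Fin n)}
    {i : Fin n} (h : ∀ j, (j, i) ∉ S) : subToPF π S (π i) = i := by
  unfold subToPF
  rw [dif_neg (by simpa using h)]
  simp

theorem pfToSub_subToPF {π : Equiv.Perm (Fin n)} {S : Finset (Fin n × Fin n)}
    (hS : IsOneSubgraph π S) : pfToSub π (subToPF π S) = S := by
  ext ⟨j, i⟩
  simp only [pfToSub, Finset.mem_filter]
  constructor
  · rintro ⟨h1, h2⟩
    by_cases h : ∃ j, (j, i) ∈ S
    · obtain ⟨j', h⟩ := h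
      rw [subToPF_of_mem hS h] at h2
      subst h2
      exact h
    · rw [subToPF_of_not (by simpa using h)] at h2
      subst h2
      simp [invFinset] at h1
  · intro h
    exact ⟨hS.1 h, subToPF_of_mem hS h⟩

theorem pfToSub_one (π : Equiv.Perm (Fin n)) (p : Fin n → Fin n) :
    IsOneSubgraph π (pfToSub π p) := by
  refine ⟨Finset.filter_subset _ _, ?_⟩
  intro i j j' h h'
  simp only [pfToSub, Finset.mem_filter] at h h'
  exact h.2.symm.trans h'.2

theorem subToPF_pfToSub {p : Fin n → Fin n} {π : Equiv.Perm (Fin n)} (h : MVPOutcome p π) :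
    subToPF π (pfToSub π p) = p := by
  funext c
  obtain ⟨i, rfl⟩ := π.surjective c
  obtain ⟨h1, h2⟩ := outcome_spec h i
  rcases h1.lt_or_eq with h3 | h3
  · apply subToPF_of_mem (pfToSub_one π p)
    simp [pfToSub, invFinset, h3, h2 h3]
  · rw [subToPF_of_not, h3]
    intro j hj
    simp only [pfToSub, invFinset, Finset.mem_filter] at hj
    have h4 := hj.1.2.1
    have h5 := hj.2
    rw [← h5, h3] at h4
    exact lt_irrefl _ h4

theorem fib_card (π : Equiv.Perm (Fin n)) : (FibMVP π).ncard =
      {S : Finset (Fin n × Fin n) | IsOneSubgraph π S ∧ IsValid π S}.ncard := by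
  symm
  refine Set.ncard_congr (fun S _ => subToPF π S) ?_ ?_ ?_
  · intro S hS
    exact ⟨outcome_pf hS.2, hS.2⟩
  · intro S T hS hT h
    rw [← pfToSub_subToPF hS.1, ← pfToSub_subToPF hT.1]
    exact congrArg _ h
  · intro p hp
    refine ⟨pfToSub π p, ⟨pfToSub_one π p, ?_⟩, subToPF_pfToSub hp.2⟩
    unfold IsValid
    rw [subToPF_pfToSub hp.2]
    exact hp.2

theorem fib_bound (π : Equiv.Perm (Fin n)) :
    (FibMVP π).ncard ≤ ∏ i : Fin n, (1 + (lInv π i).card) := by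
  have h1 : (Fintype.piFinset fun i => insert i (lInv π i)).card
      ≤ ∏ i : Fin n, (1 + (lInv π i).card) := by
    rw [Fintype.card_piFinset]
    apply Finset.prod_le_prod'
    intro i _
    rw [add_comm]
    exact Finset.card_insert_le _ _
  refine le_trans ?_ h1
  rw [← Set.ncard_coe_finset]
  refine Set.ncard_le_ncard_of_injOn (fun p => p ∘ π) ?_ ?_ (Finset.finite_toSet _)
  · intro p hp
    rw [Finset.mem_coe, Fintype.mem_piFinset]
    intro i
    obtain ⟨h2, h3⟩ := outcome_spec hp.2 i
    rcases h2.lt_or_eq with h4 | h4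
    · simp [lInv, h4, h3 h4]
    · simp [h4]
  · intro p _ q _ h
    exact π.surjective.injective_comp_right h

/-- `|Fib_n(π)| = |Valid(π)| ≤ ∏ᵢ (1 + |LInv(π,i)|)`. -/
theorem statement2 (n : ℕ) (π : Equiv.Perm (Fin n)) :
    (FibMVP π).ncard =
      {S : Finset (Fin n × Fin n) | IsOneSubgraph π S ∧ IsValid π S}.ncard ∧
    {S : Finset (Fin n × Fin n) | IsOneSubgraph π S ∧ IsValid π S}.ncard ≤
      ∏ i : Fin n, (1 + (lInv π i).card) := by
  exact ⟨fib_card π, fib_card π ▸ fib_bound π⟩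

end MVPPaper
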